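/- For every 3iet word v (i.e. v = u_{ε,ℓ,x0} for some irrational ε ∈ (0,1), ℓ with max{ε,1−ε} < ℓ < 1, x0 ∈ [0,ℓ)) and every k ∈ ℕ, the infinite word Φ_k(v) is a coding of rotation: there exist an irrational α ∈ (0,1), β ∈ (0,1), and an initial point x ∈ [0,1) such that for all n, the n-th letter of Φ_k(v) is 0 if {x + nα} ∈ [0,β) and 1 if {x + nα} ∈ [β,1). -/

import Mathlib

/-!
Put `a = 1 - ε` and `L = 1 + k * a`. The map `T_{ε,ℓ}` is the first return map to `[0, ℓ)` of the
rotation `y ↦ y + a` of the circle `ℝ / Lℤ`: from `y` in `I_A`, `I_B` or `I_C` the rotation comes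
back to `[0, ℓ)` after `1`, `k + 2` or `k + 1` steps respectively, having gone around the circle
`0`, `1` or `1` times. Writing `0` on `[0, ℓ)` and `1` on `[ℓ, L)`, the excursion is read as `0`,
`01^{k+1}` or `01^k`, which is the image of the letter of `y` under `Φ_k`. Dividing by `L` gives
`α = a / L`, `β = ℓ / L` and `x = x0 / L`, where `α` is irrational because `1 / α = 1 / a + k`.
-/

/-- The alphabet of 3iet words. -/
inductive L3 | A | B | C
deriving DecidableEq, Inhabited

/-- The three-interval exchange transformation `T_{ε,ℓ}`. -/
noncomputable def T3 (ε ℓ : ℝ) (x : ℝ) : ℝ :=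
  if x < ℓ - 1 + ε then x + 1 - ε
  else if x < ε then x + 1 - 2*ε
  else x - ε

/-- The 3iet word `u_{ε,ℓ,x0}` coding the orbit of `x0` under `T_{ε,ℓ}`. -/
noncomputable def u3 (ε ℓ x0 : ℝ) (n : ℕ) : L3 :=
  if (T3 ε ℓ)^[n] x0 < ℓ - 1 + ε then L3.A
  else if (T3 ε ℓ)^[n] x0 < ε then L3.B
  else L3.C

/-- The two-interval exchange transformation `T_ε`. -/
noncomputable def T2 (ε : ℝ) (x : ℝ) : ℝ := if x < ε then x + 1 - ε else x - ε

/-- The Sturmian word `u_{ε,x0}` of slope `ε` coding the orbit of `x0` under `T_ε`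
(letter `0` is `false`, letter `1` is `true`). -/
noncomputable def u2 (ε x0 : ℝ) (n : ℕ) : Bool := if (T2 ε)^[n] x0 < ε then false else true

/-- `w` is a factor of the infinite word `u`. -/
def IsFactor {α : Type*} (w : List α) (u : ℕ → α) : Prop :=
  ∃ i : ℕ, w = (List.range w.length).map fun j => u (i + j)

/-- The prefix of length `m` of the periodic infinite word `www⋯`;
for `|w| ≤ m` this is the fractional power `w^{m/|w|}`. -/
def powPrefix {α : Type*} [Inhabited α] (w : List α) (m : ℕ) : List α :=
  (List.range m).map fun j => w.getD (j % w.length) default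

/-- The index of the factor `w` in the infinite word `u`:
`sup {r ∈ ℚ, r ≥ 1, r|w| ∈ ℕ | w^r is a factor of u}`, as an element of `ℝ ∪ {+∞}`. -/
noncomputable def factorIndex {α : Type*} [Inhabited α] (u : ℕ → α) (w : List α) : EReal :=
  sSup {x : EReal | ∃ m : ℕ, w.length ≤ m ∧ IsFactor (powPrefix w m) u ∧
    x = (((m : ℝ) / (w.length : ℝ) : ℝ) : EReal)}

/-- The index of the infinite word `u`: `sup {ind(w) | w a nonempty factor of u}`. -/
noncomputable def wordIndex {α : Type*} [Inhabited α] (u : ℕ → α) : EReal :=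
  sSup {x : EReal | ∃ w : List α, w ≠ [] ∧ IsFactor w u ∧ x = factorIndex u w}

/-- The Gauss map `x ↦ {1/x}`. -/
noncomputable def gaussMap (x : ℝ) : ℝ := Int.fract x⁻¹

/-- `cfa ε n` is the partial quotient `a_{n+1}` of the continued fraction
expansion `ε = [0; a₁, a₂, a₃, …]` of the irrational `ε ∈ (0,1)`. -/
noncomputable def cfa (ε : ℝ) (n : ℕ) : ℕ := ⌊(gaussMap^[n] ε)⁻¹⌋₊

/-- The morphism `σ01 : A ↦ 0, B ↦ 01, C ↦ 1`. -/
def sigma01 : L3 → List Bool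
  | L3.A => [false]
  | L3.B => [false, true]
  | L3.C => [true]

/-- The morphism `σ10 : A ↦ 0, B ↦ 10, C ↦ 1`. -/
def sigma10 : L3 → List Bool
  | L3.A => [false]
  | L3.B => [true, false]
  | L3.C => [true]

/-- The image `φ(u₀)φ(u₁)φ(u₂)⋯` of an infinite word `u` under a (nonerasing) morphism `φ`. -/
def morphWord (φ : L3 → List Bool) (u : ℕ → L3) (m : ℕ) : Bool :=
  ((List.range (m+1)).flatMap fun k => φ (u k)).getD m false

/-- `u` is a uniformly recurrent infinite word: every factor occurs infinitely often
with bounded gaps (every window of some length `R` contains an occurrence). -/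
def UniformlyRecurrent {α : Type*} (u : ℕ → α) : Prop :=
  ∀ w : List α, IsFactor w u → ∃ R : ℕ, ∀ i : ℕ, ∃ j : ℕ, i ≤ j ∧ j < i + R ∧
    w = (List.range w.length).map fun t => u (j + t)

/-- `u` is eventually periodic. -/
def EventuallyPeriodic {α : Type*} (u : ℕ → α) : Prop :=
  ∃ N p : ℕ, 0 < p ∧ ∀ n : ℕ, N ≤ n → u (n + p) = u n

/-- The standard words of `ε = [0; a₁, a₂, …]`, with the index shifted by one:
`sw ε 0 = s₋₁ = 1`, `sw ε 1 = s₀ = 0`, `sw ε 2 = s₁ = s₀^{a₁-1} s₋₁`, and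
`sw ε (n+3) = s_{n+2} = s_{n+1}^{a_{n+2}} s_n`. -/
noncomputable def sw (ε : ℝ) : ℕ → List Bool
  | 0 => [true]
  | 1 => [false]
  | 2 => (List.replicate (cfa ε 0 - 1) ([false] : List Bool)).flatten ++ [true]
  | (n+3) => (List.replicate (cfa ε (n+1)) (sw ε (n+2))).flatten ++ sw ε (n+1)

/-- Denominators of the convergents of `ε`, shifted by one: `qq ε 0 = q₋₁ = 0`,
`qq ε 1 = q₀ = 1`, and `qq ε (n+2) = q_{n+1} = a_{n+1} q_n + q_{n-1}`. -/
noncomputable def qq (ε : ℝ) : ℕ → ℕ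
  | 0 => 0
  | 1 => 1
  | (n+2) => cfa ε n * qq ε (n+1) + qq ε n

/-- `u` is a 3iet word. -/
def Is3ietWord (u : ℕ → L3) : Prop :=
  ∃ ε ℓ x0 : ℝ, Irrational ε ∧ 0 < ε ∧ ε < 1 ∧ max ε (1 - ε) < ℓ ∧ ℓ < 1 ∧
    x0 ∈ Set.Ico 0 ℓ ∧ u = u3 ε ℓ x0

/-- `v` is a Sturmian word. -/
def IsSturmianWord (v : ℕ → Bool) : Prop :=
  ∃ ε x0 : ℝ, Irrational ε ∧ 0 < ε ∧ ε < 1 ∧ x0 ∈ Set.Ico (0:ℝ) 1 ∧ v = u2 ε x0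

/-- The infinite binary word `v1` is amicable with `v2` (`v1 ∝ v2`). -/
def AmicableInf (v1 v2 : ℕ → Bool) : Prop :=
  ∃ w : ℕ → L3, v1 = morphWord sigma01 w ∧ v2 = morphWord sigma10 w

/-- The morphism `Φ_k : A ↦ 0, B ↦ 01^{k+1}, C ↦ 01^k`. -/
def Phi (k : ℕ) : L3 → List Bool
  | L3.A => [false]
  | L3.B => false :: List.replicate (k+1) true
  | L3.C => false :: List.replicate k true

/-- The infinite word `B₀B₁B₂⋯` obtained by concatenating the sequence of
(nonempty) blocks `B`. -/
def concatOfBlocks (B : ℕ → List Bool) (m : ℕ) : Bool :=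
  ((List.range (m+1)).flatMap B).getD m false

section Itinerary

variable {X α : Type*} {f : X → X} {c : X → α} {x y z : X} {w w' : List α}

/-- `IsItinerary f c x w y` says that iterating `f` leads from `x` to `y` in `w.length` steps, and
that `w` is the word of labels `c` read along the way; the label of the end point `y` is not part
of `w`, so that consecutive itineraries concatenate. -/
inductive IsItinerary (f : X → X) (c : X → α) : X → List α → X → Prop
  | nil (x : X) : IsItinerary f c x [] x
  | cons {x y : X} {w : List α} (h : IsItinerary f c (f x) w y) : IsItinerary f c x (c x :: w) y

namespace IsItinerary

theorem append (h : IsItinerary f c x w y) (h' : IsItinerary f c y w' z) :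
    IsItinerary f c x (w ++ w') z := by
  induction h with
  | nil => exact h'
  | cons _ ih => exact .cons (ih h')

theorem getElem_eq (h : IsItinerary f c x w y) {n : ℕ} (hn : n < w.length) :
    w[n] = c (f^[n] x) := by
  induction h generalizing n with
  | nil => simp at hn
  | cons _ ih =>
    cases n with
    | zero => rfl
    | succ n => exact ih (Nat.lt_of_succ_lt_succ hn)

theorem replicate {b : α} {m : ℕ} (h : ∀ j < m, c (f^[j] x) = b) :
    IsItinerary f c x (List.replicate m b) (f^[m] x) := by
  induction m generalizing x with
  | zero => exact .nil x
  | succ m ih =>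
    obtain rfl : c x = b := h 0 m.succ_pos
    exact .cons (ih fun j hj => h (j + 1) (Nat.succ_lt_succ hj))

theorem flatMap_range {p : ℕ → X} {B : ℕ → List α}
    (h : ∀ n, IsItinerary f c (p n) (B n) (p (n + 1))) (n : ℕ) :
    IsItinerary f c (p 0) ((List.range n).flatMap B) (p n) := by
  induction n with
  | zero => exact .nil _
  | succ n ih =>
    rw [List.range_succ, List.flatMap_append, List.flatMap_singleton]
    exact ih.append (h n)

end IsItinerary

theorem le_length_flatMap_range {B : ℕ → List α} (hB : ∀ n, B n ≠ []) (n : ℕ) :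
    n ≤ ((List.range n).flatMap B).length := by
  induction n with
  | zero => exact Nat.zero_le _
  | succ n ih =>
    rw [List.range_succ, List.flatMap_append, List.flatMap_singleton, List.length_append]
    exact Nat.add_le_add ih (List.length_pos_of_ne_nil (hB n))

theorem concatOfBlocks_eq_of_isItinerary {c : X → Bool} {p : ℕ → X} {B : ℕ → List Bool}
    (hB : ∀ n, B n ≠ []) (h : ∀ n, IsItinerary f c (p n) (B n) (p (n + 1))) (m : ℕ) :
    concatOfBlocks B m = c (f^[m] (p 0)) := by
  have hm : m < ((List.range (m + 1)).flatMap B).length := le_length_flatMap_range hB (m + 1)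
  rw [concatOfBlocks, List.getD_eq_getElem _ _ hm]
  exact (IsItinerary.flatMap_range h (m + 1)).getElem_eq hm

end Itinerary

section Rotation

open Set

variable {L ℓ a y : ℝ}

open Classical in
/-- The label, for the coding of rotations of the circle `ℝ / Lℤ`, of a point of this circle:
`false` on the arc `[0, ℓ)` and `true` on its complement. -/
noncomputable def arcLabel (L ℓ : ℝ) (z : AddCircle L) : Bool :=
  if z ∈ ((↑) : ℝ → AddCircle L) '' Ico 0 ℓ then false else true

theorem arcLabel_coe_of_lt (hy : 0 ≤ y) (hyℓ : y < ℓ) : arcLabel L ℓ y = false :=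
  if_pos ⟨y, ⟨hy, hyℓ⟩, rfl⟩

theorem arcLabel_coe_of_le (hℓ : 0 ≤ ℓ) (hy : ℓ ≤ y) (hyL : y < L) : arcLabel L ℓ y = true := by
  have : Fact (0 < L) := ⟨by linarith⟩
  refine if_neg ?_
  rintro ⟨t, ⟨ht, htℓ⟩, hty⟩
  have hty' : t = y := (AddCircle.coe_eq_coe_iff_of_mem_Ico (a := 0)
    (by constructor <;> linarith) (by constructor <;> linarith)).1 hty
  linarith

theorem arcLabel_coe (hL : 0 < L) (hℓ : 0 ≤ ℓ) (y : ℝ) :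
    arcLabel L ℓ y = if Int.fract (y / L) < ℓ / L then false else true := by
  set t := Int.fract (y / L) * L with ht
  have hyt : (t : AddCircle L) = y := by
    have : Fact (0 < L) := ⟨hL⟩
    rw [ht, ← AddCircle.coe_equivIco_mk_apply, AddCircle.coe_equivIco]
  have htL : t < L := mul_lt_of_lt_one_left hL (Int.fract_lt_one _)
  simp only [← hyt, lt_div_iff₀ hL, ← ht]
  split_ifs with htℓ
  · exact arcLabel_coe_of_lt (mul_nonneg (Int.fract_nonneg _) hL.le) htℓ
  · exact arcLabel_coe_of_le hℓ (not_lt.1 htℓ) htL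

theorem iterate_add_coe (L a y : ℝ) (n : ℕ) :
    (· + (a : AddCircle L))^[n] y = ((y + n * a : ℝ) : AddCircle L) := by
  rw [add_right_iterate, ← nsmul_eq_mul]
  rfl

theorem isItinerary_rotation_excursion (ha : 0 ≤ a) (hy : 0 ≤ y) (hyℓ : y < ℓ) (hℓ : ℓ ≤ y + a)
    {m : ℕ} (hm : y + m * a < L) :
    IsItinerary (· + (a : AddCircle L)) (arcLabel L ℓ) y (false :: List.replicate m true)
      ((y + (m + 1) * a : ℝ) : AddCircle L) := by
  have hlabel : ∀ j < m, arcLabel L ℓ ((· + (a : AddCircle L))^[j] (y + a : ℝ)) = true := by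
    intro j hj
    have hja : 0 ≤ j * a := by positivity
    have hjm : ((j : ℝ) + 1) * a ≤ m * a := by gcongr; exact_mod_cast hj
    rw [iterate_add_coe]
    exact arcLabel_coe_of_le (by linarith) (by linarith) (by linarith)
  have hend : y + (m + 1) * a = y + a + m * a := by ring
  rw [← arcLabel_coe_of_lt (L := L) hy hyℓ, hend, ← iterate_add_coe]
  exact .cons (.replicate hlabel)

end Rotation

section ThreeIntervalExchange

open Set

variable {ε ℓ y : ℝ}

/-- The letter of the interval `I_A`, `I_B` or `I_C` of `T_{ε,ℓ}` that contains `y`, so that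
`u3 ε ℓ x0 n` is the letter of the `n`-th iterate of `x0`. -/
noncomputable def letter3 (ε ℓ y : ℝ) : L3 :=
  if y < ℓ - 1 + ε then L3.A else if y < ε then L3.B else L3.C

theorem mapsTo_T3 (hε : ε ≤ ℓ) (hε' : 1 - ε ≤ ℓ) (hℓ : ℓ ≤ 1) :
    MapsTo (T3 ε ℓ) (Ico 0 ℓ) (Ico 0 ℓ) := by
  rintro y ⟨hy, hyℓ⟩
  unfold T3
  split_ifs <;> constructor <;> linarith

theorem Phi_ne_nil (k : ℕ) (b : L3) : Phi k b ≠ [] := by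
  cases b <;> exact List.cons_ne_nil _ _

theorem isItinerary_Phi_letter3 {k : ℕ} {L : ℝ} (hL : L = 1 + k * (1 - ε)) (hℓ : ℓ ≤ 1)
    (hε : ε ≤ 1) (hy : y ∈ Ico 0 ℓ) :
    IsItinerary (· + ((1 - ε : ℝ) : AddCircle L)) (arcLabel L ℓ) y (Phi k (letter3 ε ℓ y))
      (T3 ε ℓ y) := by
  obtain ⟨hy, hyℓ⟩ := hy
  have ha : 0 ≤ 1 - ε := sub_nonneg.2 hε
  unfold letter3 T3
  split_ifs with hA hB
  · have hend : y + 1 - ε = y + (1 - ε) := by ring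
    rw [hend, Phi, ← arcLabel_coe_of_lt (L := L) hy hyℓ]
    exact .cons (.nil _)
  · have hreturn : y + ((k + 1 : ℕ) + 1) * (1 - ε) = y + 1 - 2 * ε + L := by
      push_cast
      linarith
    rw [← AddCircle.coe_add_period L (y + 1 - 2 * ε), ← hreturn]
    refine isItinerary_rotation_excursion ha hy hyℓ (by linarith) ?_
    push_cast
    linarith
  · have hreturn : y + (k + 1) * (1 - ε) = y - ε + L := by linarith
    rw [← AddCircle.coe_add_period L (y - ε), ← hreturn]
    exact isItinerary_rotation_excursion ha hy hyℓ (by linarith) (by linarith)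

theorem morphWord_Phi_u3 {k : ℕ} {L x0 : ℝ} (hL : L = 1 + k * (1 - ε)) (hε : ε ≤ ℓ)
    (hε' : 1 - ε ≤ ℓ) (hℓ : ℓ ≤ 1) (hx0 : x0 ∈ Ico 0 ℓ) (n : ℕ) :
    morphWord (Phi k) (u3 ε ℓ x0) n = arcLabel L ℓ (x0 + n * (1 - ε) : ℝ) := by
  have hblock (i : ℕ) : IsItinerary (· + ((1 - ε : ℝ) : AddCircle L)) (arcLabel L ℓ)
      ((T3 ε ℓ)^[i] x0 : ℝ) (Phi k (u3 ε ℓ x0 i)) ((T3 ε ℓ)^[i + 1] x0 : ℝ) := by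
    rw [Function.iterate_succ_apply']
    exact isItinerary_Phi_letter3 hL hℓ (hε.trans hℓ) ((mapsTo_T3 hε hε' hℓ).iterate i hx0)
  rw [← iterate_add_coe]
  exact concatOfBlocks_eq_of_isItinerary (fun i => Phi_ne_nil k (u3 ε ℓ x0 i)) hblock n

end ThreeIntervalExchange

theorem irrational_div_one_add_ratCast_mul {a : ℝ} (ha : Irrational a) (q : ℚ) :
    Irrational (a / (1 + q * a)) := by
  have hinv : (a / (1 + q * a))⁻¹ = a⁻¹ + q := by
    have := ha.ne_zero
    field_simp
  rw [← irrational_inv_iff, hinv]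
  exact ha.inv.add_ratCast q

/-- for every 3iet word `v` and every `k ∈ ℕ`, the word `Φ_k(v)` is a
coding of rotation. -/
theorem Phi_of_threeIet_is_coding_of_rotation
    (ε ℓ x0 : ℝ) (hirr : Irrational ε) (h0 : 0 < ε) (h1 : ε < 1)
    (hl : max ε (1 - ε) < ℓ) (hl1 : ℓ < 1) (hx0 : x0 ∈ Set.Ico 0 ℓ) (k : ℕ) :
    ∃ α β x : ℝ, Irrational α ∧ 0 < α ∧ α < 1 ∧ 0 < β ∧ β < 1 ∧ x ∈ Set.Ico (0:ℝ) 1 ∧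
      ∀ n : ℕ, morphWord (Phi k) (u3 ε ℓ x0) n =
        (if Int.fract (x + n * α) < β then false else true) := by
  have hε : ε < ℓ := (le_max_left _ _).trans_lt hl
  have hε' : 1 - ε < ℓ := (le_max_right _ _).trans_lt hl
  have ha : 0 < 1 - ε := sub_pos.2 h1
  have hka : 0 ≤ k * (1 - ε) := by positivity
  have hα : Irrational ((1 - ε) / (1 + k * (1 - ε))) := by
    exact_mod_cast irrational_div_one_add_ratCast_mul (by simpa using hirr.ratCast_sub 1) k
  set L := 1 + k * (1 - ε) with hL
  have hL0 : 0 < L := by linarith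
  have hlt_one {t : ℝ} (ht : t < 1) : t / L < 1 := (div_lt_one hL0).2 (by linarith)
  refine ⟨(1 - ε) / L, ℓ / L, x0 / L, hα, div_pos ha hL0, hlt_one (by linarith),
    div_pos (h0.trans hε) hL0, hlt_one hl1,
    ⟨div_nonneg hx0.1 hL0.le, hlt_one (hx0.2.trans hl1)⟩, fun n => ?_⟩
  rw [morphWord_Phi_u3 hL hε.le hε'.le hl1.le hx0, arcLabel_coe hL0 (h0.trans hε).le,
    add_div, mul_div_assoc]
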